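/- arXiv:2103.09407 — 2 statements merged into one kernel-verified Lean document; each statement's English description precedes it below -/
import Mathlib

section
/- Let P ∈ ℝ^{(n+m)×(n+m)} be symmetric positive semidefinite with blocks P11, P12, P22 such that P22 is positive definite, let F := −P22⁻¹ P12', and suppose γ A_F' P A_F + Λ = P. Then X̄ := P11 − P12 P22⁻¹ P12' is symmetric positive semidefinite and satisfies the discounted ARE X̄ = Q + γA'X̄A − γ²A'X̄B(R + γB'X̄B)⁻¹B'X̄A; moreover P11 = Q + γA'X̄A, P12 = γA'X̄B, P22 = R + γB'X̄B, and F = −γ(R + γB'X̄B)⁻¹B'X̄A. Consequently, if the discounted ARE has a unique symmetric positive semidefinite solution X*, then P = P* := [[Q + γA'X*A, γA'X*B], [γB'X*A, R + γB'X*B]] and F = F* := −γ(R + γB'X*B)⁻¹B'X*A. -/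
open Matrix MeasureTheory Filter
open scoped ENNReal

/-- Spectral radius of a real square matrix: the maximum modulus of its complex
eigenvalues, expressed via the spectral radius of its complexification. -/
noncomputable def specRad {ι : Type*} [Fintype ι] [DecidableEq ι]
    (M : Matrix ι ι ℝ) : ℝ≥0∞ :=
  spectralRadius ℂ (M.map Complex.ofReal)

/-- The block matrix `A_F = [[A, B], [FA, FB]]`. -/
noncomputable def blockAF {n m : ℕ} (A : Matrix (Fin n) (Fin n) ℝ)
    (B : Matrix (Fin n) (Fin m) ℝ) (F : Matrix (Fin m) (Fin n) ℝ) :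
    Matrix (Fin n ⊕ Fin m) (Fin n ⊕ Fin m) ℝ :=
  Matrix.fromBlocks A B (F * A) (F * B)

/-- The block column matrix `F̄ = [I_n; F]`. -/
noncomputable def extendF {n m : ℕ} (F : Matrix (Fin m) (Fin n) ℝ) :
    Matrix (Fin n ⊕ Fin m) (Fin n) ℝ :=
  Matrix.fromRows (1 : Matrix (Fin n) (Fin n) ℝ) F

/-- The block diagonal matrix `Λ = diag(Q, R)`. -/
noncomputable def blockLam {n m : ℕ} (Q : Matrix (Fin n) (Fin n) ℝ)
    (R : Matrix (Fin m) (Fin m) ℝ) :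
    Matrix (Fin n ⊕ Fin m) (Fin n ⊕ Fin m) ℝ :=
  Matrix.fromBlocks Q 0 0 R

/-- The LQR gain `F = -γ (R + γ B' X B)⁻¹ B' X A` associated with `X`. -/
noncomputable def gainF {n m : ℕ} (A : Matrix (Fin n) (Fin n) ℝ)
    (B : Matrix (Fin n) (Fin m) ℝ) (R : Matrix (Fin m) (Fin m) ℝ)
    (γ : ℝ) (X : Matrix (Fin n) (Fin n) ℝ) : Matrix (Fin m) (Fin n) ℝ :=
  -(γ • ((R + γ • (Bᵀ * X * B))⁻¹ * (Bᵀ * X * A)))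

/-- `P = [[Q + γA'XA, γA'XB], [γB'XA, R + γB'XB]]`. -/
noncomputable def Pmat {n m : ℕ} (A : Matrix (Fin n) (Fin n) ℝ)
    (B : Matrix (Fin n) (Fin m) ℝ) (Q : Matrix (Fin n) (Fin n) ℝ)
    (R : Matrix (Fin m) (Fin m) ℝ) (γ : ℝ) (X : Matrix (Fin n) (Fin n) ℝ) :
    Matrix (Fin n ⊕ Fin m) (Fin n ⊕ Fin m) ℝ :=
  Matrix.fromBlocks (Q + γ • (Aᵀ * X * A)) (γ • (Aᵀ * X * B))
    (γ • (Bᵀ * X * A)) (R + γ • (Bᵀ * X * B))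

/-- `X` solves the discounted algebraic Riccati equation
`X = Q + γA'XA − γ²A'XB(R + γB'XB)⁻¹B'XA`. -/
def IsAREsol {n m : ℕ} (A : Matrix (Fin n) (Fin n) ℝ)
    (B : Matrix (Fin n) (Fin m) ℝ) (Q : Matrix (Fin n) (Fin n) ℝ)
    (R : Matrix (Fin m) (Fin m) ℝ) (γ : ℝ) (X : Matrix (Fin n) (Fin n) ℝ) : Prop :=
  X = Q + γ • (Aᵀ * X * A)
    - (γ ^ 2) • (Aᵀ * X * B * (R + γ • (Bᵀ * X * B))⁻¹ * (Bᵀ * X * A))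

/-!
Let `F̄ = [I; F]` with `F = -P₂₂⁻¹ P₂₁`. This gain annihilates the lower block row of `P F̄`,
leaving `P F̄ = [X̄; 0]` with `X̄` the Schur complement of `P₂₂`; hence `F̄ᵀ P F̄ = X̄`. Since
`A_F = F̄ [A B]`, the equation `γ A_Fᵀ P A_F + Λ = P` reads `P = γ [A B]ᵀ X̄ [A B] + Λ`, whose
right-hand side is `Pmat` at `X̄`. Taking the Schur complement of both sides gives the Riccati
equation for `X̄`, and computing `-P₂₂⁻¹ P₂₁` from the right-hand side gives the formula for `F`.
-/

section SchurComplement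

variable {l k α : Type*} [Fintype k] [DecidableEq k] [CommRing α]

/-- The Schur complement `P₁₁ - P₁₂ P₂₂⁻¹ P₂₁` of the lower right block of `P`. It is meaningful
when `P₂₂` is invertible; otherwise `P₂₂⁻¹ = 0` by convention. -/
noncomputable def schurComplement₂₂ (P : Matrix (l ⊕ k) (l ⊕ k) α) : Matrix l l α :=
  P.toBlocks₁₁ - P.toBlocks₁₂ * P.toBlocks₂₂⁻¹ * P.toBlocks₂₁

/-- The greedy feedback gain `-P₂₂⁻¹ P₂₁` of a quadratic cost `P` on state-input pairs `(x, u)`: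
for symmetric `P` with `P₂₂` positive definite, the cost at a fixed `x` is minimal at
`u = greedyGain P x`. -/
noncomputable def greedyGain (P : Matrix (l ⊕ k) (l ⊕ k) α) : Matrix k l α :=
  -(P.toBlocks₂₂⁻¹ * P.toBlocks₂₁)

theorem mul_fromRows_one_greedyGain [Fintype l] [DecidableEq l] {P : Matrix (l ⊕ k) (l ⊕ k) α}
    (hP22 : IsUnit P.toBlocks₂₂) :
    P * fromRows (1 : Matrix l l α) (greedyGain P) = fromRows (schurComplement₂₂ P) 0 := by
  have upper : P.toBlocks₁₁ + P.toBlocks₁₂ * greedyGain P = schurComplement₂₂ P := by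
    rw [greedyGain, schurComplement₂₂, Matrix.mul_neg, ← Matrix.mul_assoc, sub_eq_add_neg]
  have lower : P.toBlocks₂₁ + P.toBlocks₂₂ * greedyGain P = 0 := by
    rw [greedyGain, Matrix.mul_neg,
      mul_nonsing_inv_cancel_left _ _ ((isUnit_iff_isUnit_det _).1 hP22), add_neg_cancel]
  nth_rw 1 [← fromBlocks_toBlocks P]
  rw [fromBlocks_mul_fromRows, Matrix.mul_one, Matrix.mul_one, upper, lower]

theorem fromCols_one_mul_mul_fromRows_one_greedyGain [Fintype l] [DecidableEq l]
    {P : Matrix (l ⊕ k) (l ⊕ k) α} (hP22 : IsUnit P.toBlocks₂₂) (K : Matrix l k α) :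
    fromCols (1 : Matrix l l α) K * P * fromRows (1 : Matrix l l α) (greedyGain P) =
      schurComplement₂₂ P := by
  rw [Matrix.mul_assoc, mul_fromRows_one_greedyGain hP22, fromCols_mul_fromRows, Matrix.one_mul,
    Matrix.mul_zero, add_zero]

theorem posSemidef_schurComplement₂₂ [Finite l] [PartialOrder α] [StarRing α]
    {P : Matrix (l ⊕ k) (l ⊕ k) α} (hP : P.PosSemidef) (hP22 : IsUnit P.toBlocks₂₂) :
    (schurComplement₂₂ P).PosSemidef := by
  classical
  have := Fintype.ofFinite l
  have congruence :=
    hP.conjTranspose_mul_mul_same (fromRows (1 : Matrix l l α) (greedyGain P))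
  rwa [conjTranspose_fromRows_eq_fromCols_conjTranspose, conjTranspose_one,
    fromCols_one_mul_mul_fromRows_one_greedyGain hP22] at congruence

end SchurComplement

section Riccati

variable {n m : ℕ} (A : Matrix (Fin n) (Fin n) ℝ) (B : Matrix (Fin n) (Fin m) ℝ)
  (Q : Matrix (Fin n) (Fin n) ℝ) (R : Matrix (Fin m) (Fin m) ℝ) (γ : ℝ)

theorem blockAF_eq_extendF_mul_fromCols (F : Matrix (Fin m) (Fin n) ℝ) :
    blockAF A B F = extendF F * fromCols A B := by
  rw [blockAF, extendF, fromRows_mul_fromCols, Matrix.one_mul, Matrix.one_mul]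

theorem Pmat_eq_smul_fromCols_add_blockLam (X : Matrix (Fin n) (Fin n) ℝ) :
    Pmat A B Q R γ X = γ • ((fromCols A B)ᵀ * X * fromCols A B) + blockLam Q R := by
  rw [transpose_fromCols, fromRows_mul, fromRows_mul_fromCols, fromBlocks_smul, blockLam,
    fromBlocks_add, Pmat, add_comm Q, add_comm R, add_zero, add_zero]

theorem smul_blockAF_greedyGain_add_blockLam {P : Matrix (Fin n ⊕ Fin m) (Fin n ⊕ Fin m) ℝ}
    (hP22 : IsUnit P.toBlocks₂₂) :
    γ • ((blockAF A B (greedyGain P))ᵀ * P * blockAF A B (greedyGain P)) + blockLam Q R =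
      Pmat A B Q R γ (schurComplement₂₂ P) := by
  have congruence : (extendF (greedyGain P))ᵀ * P * extendF (greedyGain P) =
      schurComplement₂₂ P := by
    rw [extendF, transpose_fromRows, transpose_one,
      fromCols_one_mul_mul_fromRows_one_greedyGain hP22]
  rw [Pmat_eq_smul_fromCols_add_blockLam, ← congruence, blockAF_eq_extendF_mul_fromCols,
    transpose_mul]
  simp only [Matrix.mul_assoc]

theorem greedyGain_Pmat (X : Matrix (Fin n) (Fin n) ℝ) :
    greedyGain (Pmat A B Q R γ X) = gainF A B R γ X := by
  simp only [greedyGain, Pmat, gainF, toBlocks_fromBlocks₂₁, toBlocks_fromBlocks₂₂,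
    Matrix.mul_smul]

theorem isAREsol_iff_schurComplement₂₂_Pmat_eq (X : Matrix (Fin n) (Fin n) ℝ) :
    IsAREsol A B Q R γ X ↔ schurComplement₂₂ (Pmat A B Q R γ X) = X := by
  simp only [IsAREsol, schurComplement₂₂, Pmat, toBlocks_fromBlocks₁₁, toBlocks_fromBlocks₁₂,
    toBlocks_fromBlocks₂₁, toBlocks_fromBlocks₂₂, Matrix.smul_mul, Matrix.mul_smul, smul_smul,
    ← pow_two, eq_comm]

theorem kkt_solution_is_riccati_general {P : Matrix (Fin n ⊕ Fin m) (Fin n ⊕ Fin m) ℝ}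
    (hP : P.PosSemidef) (hP22 : P.toBlocks₂₂.PosDef) {F : Matrix (Fin m) (Fin n) ℝ}
    (hF : F = -(P.toBlocks₂₂⁻¹ * P.toBlocks₁₂ᵀ))
    (hPeq : γ • ((blockAF A B F)ᵀ * P * blockAF A B F) + blockLam Q R = P)
    {X : Matrix (Fin n) (Fin n) ℝ}
    (hX : X = P.toBlocks₁₁ - P.toBlocks₁₂ * P.toBlocks₂₂⁻¹ * P.toBlocks₁₂ᵀ) :
    X.PosSemidef ∧ IsAREsol A B Q R γ X ∧
      P.toBlocks₁₁ = Q + γ • (Aᵀ * X * A) ∧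
      P.toBlocks₁₂ = γ • (Aᵀ * X * B) ∧
      P.toBlocks₂₂ = R + γ • (Bᵀ * X * B) ∧
      F = gainF A B R γ X ∧
      ∀ Xstar : Matrix (Fin n) (Fin n) ℝ, Xstar.PosSemidef → IsAREsol A B Q R γ Xstar →
        (∀ Y : Matrix (Fin n) (Fin n) ℝ, Y.PosSemidef → IsAREsol A B Q R γ Y → Y = Xstar) →
        P = Pmat A B Q R γ Xstar ∧ F = gainF A B R γ Xstar := by
  have hP21 : P.toBlocks₂₁ = P.toBlocks₁₂ᵀ :=
    (congrArg toBlocks₂₁ (isHermitian_iff_isSymm.1 hP.isHermitian)).symm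
  have hF_greedy : F = greedyGain P := by rw [hF, greedyGain, hP21]
  have hX_schur : X = schurComplement₂₂ P := by rw [hX, schurComplement₂₂, hP21]
  have hP_eq : P = Pmat A B Q R γ X := by
    rw [hX_schur, ← smul_blockAF_greedyGain_add_blockLam A B Q R γ hP22.isUnit, ← hF_greedy, hPeq]
  have hX_posSemidef : X.PosSemidef := hX_schur ▸ posSemidef_schurComplement₂₂ hP hP22.isUnit
  have hX_are : IsAREsol A B Q R γ X := by
    rw [isAREsol_iff_schurComplement₂₂_Pmat_eq, ← hP_eq, hX_schur]
  have hF_gain : F = gainF A B R γ X := by rw [hF_greedy, ← greedyGain_Pmat A B Q, ← hP_eq]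
  refine ⟨hX_posSemidef, hX_are, congrArg toBlocks₁₁ hP_eq, congrArg toBlocks₁₂ hP_eq,
    congrArg toBlocks₂₂ hP_eq, hF_gain, fun Xstar _ _ hunique ↦ ?_⟩
  obtain rfl : X = Xstar := hunique X hX_posSemidef hX_are
  exact ⟨hP_eq, hF_gain⟩

end Riccati

theorem kkt_solution_is_riccati (n m : ℕ) (hn : 0 < n) (hm : 0 < m)
    (A : Matrix (Fin n) (Fin n) ℝ) (B : Matrix (Fin n) (Fin m) ℝ)
    (Q : Matrix (Fin n) (Fin n) ℝ) (R : Matrix (Fin m) (Fin m) ℝ)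
    (hQ : Q.PosSemidef) (hR : R.PosDef)
    (γ : ℝ) (hγ0 : 0 < γ) (hγ1 : γ < 1)
    (P : Matrix (Fin n ⊕ Fin m) (Fin n ⊕ Fin m) ℝ)
    (hP : P.PosSemidef) (hP22 : (P.toBlocks₂₂).PosDef)
    (F : Matrix (Fin m) (Fin n) ℝ)
    (hFdef : F = -((P.toBlocks₂₂)⁻¹ * (P.toBlocks₁₂)ᵀ))
    (hPeq : γ • ((blockAF A B F)ᵀ * P * blockAF A B F) + blockLam Q R = P) :
    (P.toBlocks₁₁ - P.toBlocks₁₂ * (P.toBlocks₂₂)⁻¹ * (P.toBlocks₁₂)ᵀ).PosSemidef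
    ∧ IsAREsol A B Q R γ
        (P.toBlocks₁₁ - P.toBlocks₁₂ * (P.toBlocks₂₂)⁻¹ * (P.toBlocks₁₂)ᵀ)
    ∧ P.toBlocks₁₁ = Q + γ • (Aᵀ
        * (P.toBlocks₁₁ - P.toBlocks₁₂ * (P.toBlocks₂₂)⁻¹ * (P.toBlocks₁₂)ᵀ) * A)
    ∧ P.toBlocks₁₂ = γ • (Aᵀ
        * (P.toBlocks₁₁ - P.toBlocks₁₂ * (P.toBlocks₂₂)⁻¹ * (P.toBlocks₁₂)ᵀ) * B)
    ∧ P.toBlocks₂₂ = R + γ • (Bᵀ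
        * (P.toBlocks₁₁ - P.toBlocks₁₂ * (P.toBlocks₂₂)⁻¹ * (P.toBlocks₁₂)ᵀ) * B)
    ∧ F = gainF A B R γ
        (P.toBlocks₁₁ - P.toBlocks₁₂ * (P.toBlocks₂₂)⁻¹ * (P.toBlocks₁₂)ᵀ)
    ∧ ∀ Xstar : Matrix (Fin n) (Fin n) ℝ,
        Xstar.PosSemidef → IsAREsol A B Q R γ Xstar →
        (∀ Y : Matrix (Fin n) (Fin n) ℝ, Y.PosSemidef → IsAREsol A B Q R γ Y → Y = Xstar) →
        P = Pmat A B Q R γ Xstar ∧ F = gainF A B R γ Xstar :=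
  kkt_solution_is_riccati_general A B Q R γ hP hP22 hFdef hPeq rfl
end

section
/- Assume the discounted ARE has a unique symmetric positive semidefinite solution X* with stabilizing gain F* := −γ(R + γB'X*B)⁻¹B'X*A satisfying ρ(A + BF*) < 1, define P* := [[Q + γA'X*A, γA'X*B], [γB'X*A, R + γB'X*B]], and let F⁰ ∈ ℝ^{m×n} satisfy ρ(A + BF⁰) < 1. Define the primal-dual iteration: P^s is the unique symmetric solution of γ (A_{F^s})' P A_{F^s} + Λ = P, and F^{s+1} := −(P^s_{22})⁻¹ (P^s_{12})'. Then the sequences converge: P^s → P* and F^s → F* as s → ∞ (entrywise). -/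
open Matrix MeasureTheory Filter
open scoped ENNReal

/-!
The equation for `P^s` forces `P^s = Pmat X^s`, where `X^s` is the discounted cost of the
stationary gain `F^s`, and the update of `F` becomes `F^{s+1} = gainF X^s`: the primal-dual
iteration is Hewer's policy iteration for the pair `(√γ A, √γ B)`. Completing the square in the
Bellman equation shows that the improved gain is again stabilizing and that
`X^s ≥ X^{s+1} ≥ 0` in the Loewner order. The monotone limit of `X^s` is a positive semidefinite
solution of the Riccati equation, hence equal to `X*` by uniqueness.
-/

open scoped MatrixOrder Topology

section SpectralRadius

theorem tendsto_pow_nhds_zero_of_spectralRadius_lt_one {𝔸 : Type*} [NormedRing 𝔸]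
    [NormedAlgebra ℂ 𝔸] [CompleteSpace 𝔸] {a : 𝔸} (ha : spectralRadius ℂ a < 1) :
    Tendsto (fun k : ℕ => a ^ k) atTop (𝓝 0) := by
  obtain ⟨r, ha_r, hr⟩ := ENNReal.lt_iff_exists_nnreal_btwn.1 ha
  have gelfand := spectrum.pow_nnnorm_pow_one_div_tendsto_nhds_spectralRadius a
  have norm_pow_le : ∀ᶠ k : ℕ in atTop, ‖a ^ k‖ ≤ (r : ℝ) ^ k := by
    filter_upwards [gelfand.eventually_lt_const ha_r, eventually_gt_atTop 0] with k hk hk0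
    rw [one_div, ENNReal.rpow_inv_lt_iff (by positivity), ENNReal.rpow_natCast] at hk
    exact_mod_cast hk.le
  exact squeeze_zero_norm' norm_pow_le
    (tendsto_pow_atTop_nhds_zero_of_lt_one r.2 (by exact_mod_cast hr))

theorem spectralRadius_smul {𝕜 𝔸 : Type*} [NormedField 𝕜] [Ring 𝔸] [Algebra 𝕜 𝔸] (c : 𝕜) (a : 𝔸) :
    spectralRadius 𝕜 (c • a) = ‖c‖₊ * spectralRadius 𝕜 a := by
  rcases eq_or_ne c 0 with rfl | hc
  · simp
  have spectrum_smul : spectrum 𝕜 (c • a) = (c * ·) '' spectrum 𝕜 a :=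
    spectrum.unit_smul_eq_smul a (Units.mk0 c hc)
  simp only [spectralRadius, spectrum_smul, iSup_image, nnnorm_mul, ENNReal.coe_mul,
    ENNReal.mul_iSup]

variable {ι : Type*} [Fintype ι] [DecidableEq ι]

theorem mem_spectrum_iff_exists_mulVec_eq_smul {K : Type*} [Field K] {M : Matrix ι ι K} {z : K} :
    z ∈ spectrum K M ↔ ∃ v : ι → K, v ≠ 0 ∧ M *ᵥ v = z • v := by
  rw [← Matrix.spectrum_toLin', ← Module.End.hasEigenvalue_iff_mem_spectrum,
    Module.End.hasEigenvalue_iff, Submodule.ne_bot_iff]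
  simp only [Module.End.mem_eigenspace_iff, Matrix.toLin'_apply, and_comm]

section

attribute [local instance] Matrix.linftyOpNormedRing Matrix.linftyOpNormedAlgebra

theorem specRad_lt_one_iff {M : Matrix ι ι ℝ} :
    specRad M < 1 ↔ ∀ z ∈ spectrum ℂ (M.map Complex.ofReal), ‖z‖ < 1 := by
  refine ⟨fun hM z hz => ?_, fun hM => ?_⟩
  · have : (‖z‖₊ : ℝ≥0∞) < 1 := (le_iSup₂ (α := ℝ≥0∞) z hz).trans_lt hM
    exact_mod_cast this
  · cases isEmpty_or_nonempty ι
    · simp [specRad]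
    · have : CompleteSpace (Matrix ι ι ℂ) := FiniteDimensional.complete ℂ _
      exact spectrum.spectralRadius_lt_of_forall_lt _ hM

theorem tendsto_pow_nhds_zero_of_specRad_lt_one {M : Matrix ι ι ℝ} (hM : specRad M < 1) :
    Tendsto (fun k : ℕ => M ^ k) atTop (𝓝 0) := by
  have : CompleteSpace (Matrix ι ι ℂ) := FiniteDimensional.complete ℂ _
  have hre : Continuous fun N : Matrix ι ι ℂ => N.map Complex.re :=
    continuous_id.matrix_map Complex.continuous_re
  have re_pow (k : ℕ) : (M.map Complex.ofReal ^ k).map Complex.re = M ^ k := by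
    have ofReal_pow : (M ^ k).map Complex.ofReal = M.map Complex.ofReal ^ k :=
      map_pow Complex.ofRealHom.mapMatrix M k
    rw [← ofReal_pow]
    ext i j
    simp
  have re_zero : (0 : Matrix ι ι ℂ).map Complex.re = 0 := Matrix.map_zero _ Complex.zero_re
  have := (hre.tendsto 0).comp (tendsto_pow_nhds_zero_of_spectralRadius_lt_one hM)
  simpa only [Function.comp_def, re_pow, re_zero] using this

end

theorem specRad_smul (c : ℝ) (M : Matrix ι ι ℝ) : specRad (c • M) = ‖c‖₊ * specRad M := by
  have ofReal_smul : (c • M).map Complex.ofReal = (c : ℂ) • M.map Complex.ofReal := by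
    ext i j
    simp
  rw [specRad, ofReal_smul, spectralRadius_smul, Complex.nnnorm_real, specRad]

theorem specRad_smul_lt_one {c : ℝ} (hc : ‖c‖ ≤ 1) {M : Matrix ι ι ℝ} (hM : specRad M < 1) :
    specRad (c • M) < 1 := by
  rw [specRad_smul]
  exact (mul_le_of_le_one_left' (by exact_mod_cast hc)).trans_lt hM

end SpectralRadius

section LoewnerOrder

variable {ι κ : Type*}

theorem star_dotProduct_conj_mulVec {S : Type*} [NonUnitalSemiring S] [StarRing S] [Fintype ι]
    [Fintype κ] (L : Matrix κ ι S) (Y : Matrix κ κ S) (v : ι → S) :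
    star v ⬝ᵥ (Lᴴ * Y * L) *ᵥ v = star (L *ᵥ v) ⬝ᵥ Y *ᵥ (L *ᵥ v) := by
  rw [← Matrix.mulVec_mulVec, ← Matrix.mulVec_mulVec, Matrix.dotProduct_mulVec,
    ← Matrix.star_mulVec]

section RCLike

open scoped ComplexOrder

variable {𝕜 : Type*} [RCLike 𝕜]

theorem isClosed_setOf_posSemidef : IsClosed {X : Matrix ι ι 𝕜 | X.PosSemidef} := by
  simp only [Matrix.PosSemidef, Set.ofPred_and, Set.ofPred_forall]
  refine (isClosed_eq (by fun_prop) continuous_id).inter (isClosed_iInter fun x => ?_)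
  simp only [Finsupp.sum]
  exact isClosed_le continuous_const (by fun_prop)

theorem matrix_orderClosedTopology : OrderClosedTopology (Matrix ι ι 𝕜) where
  isClosed_le' := (isClosed_setOf_posSemidef (ι := ι) (𝕜 := 𝕜)).preimage
    (continuous_snd.sub continuous_fst)

attribute [local instance] matrix_orderClosedTopology

theorem nonneg_of_conjTranspose_mul_mul_le [Fintype ι] [DecidableEq ι] {M X : Matrix ι ι 𝕜}
    (hM : Tendsto (fun k : ℕ => M ^ k) atTop (𝓝 0)) (hX : Mᴴ * X * M ≤ X) : 0 ≤ X := by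
  have pow_le (k : ℕ) : (M ^ k)ᴴ * X * M ^ k ≤ X := by
    induction k with
    | zero => simp
    | succ k ih =>
      calc (M ^ (k + 1))ᴴ * X * M ^ (k + 1) = Mᴴ * ((M ^ k)ᴴ * X * M ^ k) * M := by
            simp only [pow_succ, Matrix.conjTranspose_mul, Matrix.mul_assoc]
        _ ≤ Mᴴ * X * M := star_left_conjugate_le_conjugate ih M
        _ ≤ X := hX
  have hconj : Continuous fun N : Matrix ι ι 𝕜 => Nᴴ * X * N := by fun_prop
  have lim : Tendsto (fun k : ℕ => (M ^ k)ᴴ * X * M ^ k) atTop (𝓝 0) := by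
    simpa [Function.comp_def] using (hconj.tendsto 0).comp hM
  exact le_of_tendsto' lim pow_le

theorem mulVec_eq_zero_of_conjTranspose_mul_mul_add_le [Fintype ι] [Fintype κ]
    {N X : Matrix ι ι 𝕜} {H : Matrix κ ι 𝕜} {S : Matrix κ κ 𝕜} (hS : S.PosDef) (hX : 0 ≤ X)
    (hle : Hᴴ * S * H + Nᴴ * X * N ≤ X) {z : 𝕜} {v : ι → 𝕜} (hv : N *ᵥ v = z • v)
    (hz : 1 ≤ ‖z‖) : H *ᵥ v = 0 := by
  by_contra hHv
  have form_N : star v ⬝ᵥ (Nᴴ * X * N) *ᵥ v = (‖z‖ ^ 2 : ℝ) • (star v ⬝ᵥ X *ᵥ v) := by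
    rw [star_dotProduct_conj_mulVec, hv, Matrix.mulVec_smul, star_smul, smul_dotProduct,
      dotProduct_smul, smul_smul, RCLike.real_smul_eq_coe_smul (K := 𝕜), RCLike.ofReal_pow,
      ← RCLike.conj_mul, RCLike.star_def]
  have form_X_nonneg := (Matrix.nonneg_iff_posSemidef.1 hX).re_dotProduct_nonneg v
  have form_S_pos := hS.re_dotProduct_pos hHv
  have decay := (Matrix.le_iff.1 hle).re_dotProduct_nonneg v
  rw [Matrix.sub_mulVec, Matrix.add_mulVec, dotProduct_sub, dotProduct_add, form_N,
    star_dotProduct_conj_mulVec, map_sub, map_add, RCLike.smul_re] at decay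
  have := le_mul_of_one_le_left form_X_nonneg (one_le_pow₀ hz : 1 ≤ ‖z‖ ^ 2)
  linarith

end RCLike

theorem exists_tendsto_of_antitone_of_bddBelow {α : Type*} [Preorder α] [Finite ι]
    {X : α → Matrix ι ι ℝ} (hX : Antitone X) (hbdd : BddBelow (Set.range X)) :
    ∃ Y, Tendsto X atTop (𝓝 Y) := by
  classical
  have := Fintype.ofFinite ι
  obtain ⟨L, hL⟩ := hbdd
  have hpsd (k : α) : (X k - L).PosSemidef := hL ⟨k, rfl⟩
  have form_tendsto (x : ι → ℝ) : ∃ l, Tendsto (fun k => x ⬝ᵥ (X k - L) *ᵥ x) atTop (𝓝 l) := by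
    refine ⟨_, tendsto_atTop_ciInf (fun k l hkl => ?_) ⟨0, ?_⟩⟩
    · have : 0 ≤ x ⬝ᵥ (X k - X l) *ᵥ x := (hX hkl).dotProduct_mulVec_nonneg x
      simp only [Matrix.sub_mulVec, dotProduct_sub] at this ⊢
      linarith
    · rintro _ ⟨k, rfl⟩
      exact (hpsd k).dotProduct_mulVec_nonneg x
  choose l hl using form_tendsto
  let e (i : ι) : ι → ℝ := Pi.single i 1
  have polarization (k : α) (i j : ι) : X k i j = L i j + ((e i + e j) ⬝ᵥ (X k - L) *ᵥ (e i + e j)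
      - e i ⬝ᵥ (X k - L) *ᵥ e i - e j ⬝ᵥ (X k - L) *ᵥ e j) / 2 := by
    have symm : X k j i - L j i = X k i j - L i j := (hpsd k).isHermitian.apply i j
    simp only [e, Matrix.mulVec_add, dotProduct_add, add_dotProduct, Matrix.mulVec_single_one,
      single_one_dotProduct, Matrix.col_apply, Matrix.sub_apply, symm]
    ring
  refine ⟨.of fun i j => L i j + (l (e i + e j) - l (e i) - l (e j)) / 2,
    tendsto_pi_nhds.2 fun i => tendsto_pi_nhds.2 fun j => ?_⟩
  simp only [polarization]
  exact ((((hl _).sub (hl _)).sub (hl _)).div_const 2).const_add _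

section Complexification

open scoped ComplexOrder

theorem map_ofReal_mul {τ : Type*} [Fintype κ] (M : Matrix ι κ ℝ) (N : Matrix κ τ ℝ) :
    (M * N).map Complex.ofReal = M.map Complex.ofReal * N.map Complex.ofReal :=
  Matrix.map_mul (f := Complex.ofRealHom)

theorem map_ofReal_transpose (M : Matrix ι κ ℝ) :
    Mᵀ.map Complex.ofReal = (M.map Complex.ofReal)ᴴ := by
  ext i j
  simp

theorem posSemidef_map_ofReal [Finite ι] {X : Matrix ι ι ℝ} (hX : X.PosSemidef) :
    (X.map Complex.ofReal).PosSemidef := by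
  classical
  have := Fintype.ofFinite ι
  obtain ⟨L, rfl⟩ := CStarAlgebra.nonneg_iff_eq_star_mul_self.1 hX.nonneg
  rw [Matrix.star_eq_conjTranspose, Matrix.conjTranspose_eq_transpose_of_trivial, map_ofReal_mul,
    map_ofReal_transpose]
  exact Matrix.posSemidef_conjTranspose_mul_self _

theorem posDef_map_ofReal [Finite ι] {S : Matrix ι ι ℝ} (hS : S.PosDef) :
    (S.map Complex.ofReal).PosDef := by
  classical
  have := Fintype.ofFinite ι
  exact (posSemidef_map_ofReal hS.posSemidef).posDef_iff_isUnit.2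
    (hS.isUnit.map Complex.ofRealHom.mapMatrix)

-- An eigenvector of `N` with eigenvalue of modulus at least one is killed by `H`, so it is also an
-- eigenvector of `N + L * H`.
theorem specRad_lt_one_of_transpose_mul_mul_add_le [Fintype ι] [DecidableEq ι] [Fintype κ]
    {N X : Matrix ι ι ℝ} {L : Matrix ι κ ℝ} {H : Matrix κ ι ℝ} {S : Matrix κ κ ℝ}
    (hS : S.PosDef) (hX : 0 ≤ X) (hstab : specRad (N + L * H) < 1)
    (hle : Hᵀ * S * H + Nᵀ * X * N ≤ X) : specRad N < 1 := by
  refine specRad_lt_one_iff.2 fun z hz => ?_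
  obtain ⟨v, hv0, hv⟩ := mem_spectrum_iff_exists_mulVec_eq_smul.1 hz
  by_contra! hz1
  have hHv : H.map Complex.ofReal *ᵥ v = 0 := by
    refine mulVec_eq_zero_of_conjTranspose_mul_mul_add_le (posDef_map_ofReal hS)
      (posSemidef_map_ofReal (Matrix.nonneg_iff_posSemidef.1 hX)).nonneg ?_ hv hz1
    have := posSemidef_map_ofReal hle
    rwa [Matrix.map_sub _ Complex.ofReal_sub, Matrix.map_add _ Complex.ofReal_add,
      map_ofReal_mul, map_ofReal_mul, map_ofReal_mul, map_ofReal_mul, map_ofReal_transpose,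
      map_ofReal_transpose] at this
  have hNLH : (N + L * H).map Complex.ofReal *ᵥ v = z • v := by
    rw [Matrix.map_add _ Complex.ofReal_add, map_ofReal_mul, Matrix.add_mulVec,
      ← Matrix.mulVec_mulVec, hHv, Matrix.mulVec_zero, add_zero, hv]
  exact hz1.not_gt (specRad_lt_one_iff.1 hstab z
    (mem_spectrum_iff_exists_mulVec_eq_smul.2 ⟨v, hv0, hNLH⟩))

end Complexification

end LoewnerOrder

section PolicyIteration

variable {n m : ℕ} {A : Matrix (Fin n) (Fin n) ℝ} {B : Matrix (Fin n) (Fin m) ℝ}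
  {Q : Matrix (Fin n) (Fin n) ℝ} {R : Matrix (Fin m) (Fin m) ℝ} {γ : ℝ}
  {F : Matrix (Fin m) (Fin n) ℝ} {X Y : Matrix (Fin n) (Fin n) ℝ}

/-- One step of policy evaluation: the discounted cost of playing the gain `F` once and then
paying the terminal cost `X`. Its fixed point is the cost of the stationary gain `F`. -/
noncomputable def bellmanMap (A : Matrix (Fin n) (Fin n) ℝ) (B : Matrix (Fin n) (Fin m) ℝ)
    (Q : Matrix (Fin n) (Fin n) ℝ) (R : Matrix (Fin m) (Fin m) ℝ) (γ : ℝ)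
    (F : Matrix (Fin m) (Fin n) ℝ) (X : Matrix (Fin n) (Fin n) ℝ) : Matrix (Fin n) (Fin n) ℝ :=
  Q + Fᵀ * R * F + γ • ((A + B * F)ᵀ * X * (A + B * F))

/-- The right-hand side of the discounted algebraic Riccati equation, i.e. one step of value
iteration. -/
noncomputable def riccatiMap (A : Matrix (Fin n) (Fin n) ℝ) (B : Matrix (Fin n) (Fin m) ℝ)
    (Q : Matrix (Fin n) (Fin n) ℝ) (R : Matrix (Fin m) (Fin m) ℝ) (γ : ℝ)
    (X : Matrix (Fin n) (Fin n) ℝ) : Matrix (Fin n) (Fin n) ℝ :=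
  Q + γ • (Aᵀ * X * A)
    - (γ ^ 2) • (Aᵀ * X * B * (R + γ • (Bᵀ * X * B))⁻¹ * (Bᵀ * X * A))

theorem isAREsol_iff_eq_riccatiMap : IsAREsol A B Q R γ X ↔ X = riccatiMap A B Q R γ X :=
  Iff.rfl

theorem conjTranspose_sqrt_smul_mul_mul {ι κ : Type*} [Fintype ι] (hγ : 0 ≤ γ)
    (M : Matrix ι κ ℝ) (X : Matrix ι ι ℝ) : (√γ • M)ᴴ * X * (√γ • M) = γ • (Mᴴ * X * M) := by
  rw [Matrix.conjTranspose_smul, Matrix.smul_mul, Matrix.smul_mul, Matrix.mul_smul, smul_smul,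
    star_trivial, Real.mul_self_sqrt hγ]

theorem posDef_add_smul_transpose_mul_mul {ι κ : Type*} [Fintype ι] [Finite κ] {R : Matrix κ κ ℝ}
    {X : Matrix ι ι ℝ} (hR : R.PosDef) (hγ : 0 ≤ γ) (hX : X.PosSemidef) (B : Matrix ι κ ℝ) :
    (R + γ • (Bᵀ * X * B)).PosDef :=
  hR.add_posSemidef ((hX.conjTranspose_mul_mul_same B).smul hγ)

theorem mul_gainF (hS : IsUnit (R + γ • (Bᵀ * X * B))) :
    (R + γ • (Bᵀ * X * B)) * gainF A B R γ X = -(γ • (Bᵀ * X * A)) := by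
  rw [gainF, Matrix.mul_neg, Matrix.mul_smul,
    Matrix.mul_nonsing_inv_cancel_left _ _ ((Matrix.isUnit_iff_isUnit_det _).1 hS)]

theorem riccatiMap_eq_add_mul_gainF :
    riccatiMap A B Q R γ X = Q + γ • (Aᵀ * X * A) + γ • (Aᵀ * X * B * gainF A B R γ X) := by
  rw [riccatiMap, gainF, Matrix.mul_neg, Matrix.mul_smul, smul_neg, smul_smul, ← pow_two,
    Matrix.mul_assoc (Aᵀ * X * B), sub_eq_add_neg]

-- Completing the square in `F`.
theorem bellmanMap_eq_riccatiMap_add (hR : R.PosDef) (hγ : 0 ≤ γ) (hX : X.PosSemidef)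
    (F : Matrix (Fin m) (Fin n) ℝ) :
    bellmanMap A B Q R γ F X = riccatiMap A B Q R γ X
      + (F - gainF A B R γ X)ᵀ * (R + γ • (Bᵀ * X * B)) * (F - gainF A B R γ X) := by
  have hS := posDef_add_smul_transpose_mul_mul hR hγ hX B
  have mul_gain := mul_gainF (A := A) hS.isUnit
  have gain_mul : (gainF A B R γ X)ᵀ * (R + γ • (Bᵀ * X * B)) = -(γ • (Aᵀ * X * B)) := by
    have S_transpose : (R + γ • (Bᵀ * X * B))ᵀ = R + γ • (Bᵀ * X * B) := hS.isHermitian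
    have X_transpose : Xᵀ = X := hX.isHermitian
    have transposed := congrArg Matrix.transpose mul_gain
    rwa [Matrix.transpose_mul, S_transpose, Matrix.transpose_neg, Matrix.transpose_smul,
      Matrix.transpose_mul, Matrix.transpose_mul, Matrix.transpose_transpose, X_transpose,
      ← Matrix.mul_assoc] at transposed
  have square : (F - gainF A B R γ X)ᵀ * (R + γ • (Bᵀ * X * B)) * (F - gainF A B R γ X)
      = Fᵀ * (R + γ • (Bᵀ * X * B)) * F + Fᵀ * (γ • (Bᵀ * X * A)) + γ • (Aᵀ * X * B) * F
        - γ • (Aᵀ * X * B) * gainF A B R γ X := by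
    rw [Matrix.transpose_sub, Matrix.sub_mul, gain_mul, Matrix.mul_sub, Matrix.sub_mul,
      Matrix.sub_mul, Matrix.mul_assoc Fᵀ _ (gainF A B R γ X), mul_gain]
    simp only [Matrix.mul_neg, Matrix.neg_mul]
    abel
  rw [square, riccatiMap_eq_add_mul_gainF, bellmanMap]
  simp only [Matrix.transpose_add, Matrix.transpose_mul, Matrix.add_mul, Matrix.mul_add,
    Matrix.mul_assoc, Matrix.smul_mul, Matrix.mul_smul, smul_add]
  abel

theorem bellmanMap_gainF (hR : R.PosDef) (hγ : 0 ≤ γ) (hX : X.PosSemidef) :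
    bellmanMap A B Q R γ (gainF A B R γ X) X = riccatiMap A B Q R γ X := by
  simp [bellmanMap_eq_riccatiMap_add hR hγ hX]

theorem bellmanMap_gainF_le (hR : R.PosDef) (hγ : 0 ≤ γ) (hX : X.PosSemidef)
    (F : Matrix (Fin m) (Fin n) ℝ) :
    bellmanMap A B Q R γ (gainF A B R γ X) X ≤ bellmanMap A B Q R γ F X := by
  rw [bellmanMap_gainF hR hγ hX, bellmanMap_eq_riccatiMap_add hR hγ hX F]
  exact le_add_of_nonneg_right ((posDef_add_smul_transpose_mul_mul hR hγ
    hX B).posSemidef.conjTranspose_mul_mul_same _).nonneg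

theorem bellmanMap_sub_bellmanMap :
    bellmanMap A B Q R γ F X - bellmanMap A B Q R γ F Y
      = γ • ((A + B * F)ᵀ * (X - Y) * (A + B * F)) := by
  rw [bellmanMap, bellmanMap, add_sub_add_left_eq_sub, Matrix.mul_sub, Matrix.sub_mul, smul_sub]

theorem le_of_le_bellmanMap_of_bellmanMap_le (hγ : 0 ≤ γ)
    (hF : specRad (√γ • (A + B * F)) < 1) (hY : Y ≤ bellmanMap A B Q R γ F Y)
    (hX : bellmanMap A B Q R γ F X ≤ X) : Y ≤ X := by
  refine sub_nonneg.1 (nonneg_of_conjTranspose_mul_mul_le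
    (tendsto_pow_nhds_zero_of_specRad_lt_one hF) ?_)
  rw [conjTranspose_sqrt_smul_mul_mul hγ, Matrix.conjTranspose_eq_transpose_of_trivial,
    ← bellmanMap_sub_bellmanMap (Q := Q) (R := R)]
  exact sub_le_sub hX hY

theorem posSemidef_of_eq_bellmanMap (hQ : Q.PosSemidef) (hR : R.PosDef) (hγ : 0 ≤ γ)
    (hF : specRad (√γ • (A + B * F)) < 1) (hX : X = bellmanMap A B Q R γ F X) :
    X.PosSemidef := by
  refine Matrix.nonneg_iff_posSemidef.1 (le_of_le_bellmanMap_of_bellmanMap_le hγ hF ?_ hX.ge)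
  simpa [bellmanMap] using (hQ.add (hR.posSemidef.conjTranspose_mul_mul_same F)).nonneg

theorem specRad_gainF_lt_one (hQ : Q.PosSemidef) (hR : R.PosDef) (hγ : 0 ≤ γ)
    (hF : specRad (√γ • (A + B * F)) < 1) (hX : X = bellmanMap A B Q R γ F X) :
    specRad (√γ • (A + B * gainF A B R γ X)) < 1 := by
  have hXpsd := posSemidef_of_eq_bellmanMap hQ hR hγ hF hX
  set G := gainF A B R γ X
  have closed_loop : √γ • (A + B * G) + (√γ • B) * (F - G) = √γ • (A + B * F) := by
    rw [Matrix.smul_mul, ← smul_add, Matrix.mul_sub, add_assoc, add_sub_cancel]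
  have stage_cost_nonneg : 0 ≤ Q + Gᵀ * R * G :=
    (hQ.add (hR.posSemidef.conjTranspose_mul_mul_same G)).nonneg
  refine specRad_lt_one_of_transpose_mul_mul_add_le
    (posDef_add_smul_transpose_mul_mul hR hγ hXpsd B) hXpsd.nonneg (closed_loop ▸ hF) ?_
  calc (F - G)ᵀ * (R + γ • (Bᵀ * X * B)) * (F - G)
        + (√γ • (A + B * G))ᵀ * X * (√γ • (A + B * G))
      = (F - G)ᵀ * (R + γ • (Bᵀ * X * B)) * (F - G) + γ • ((A + B * G)ᵀ * X * (A + B * G)) :=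
        congrArg _ (conjTranspose_sqrt_smul_mul_mul hγ _ X)
    _ ≤ (F - G)ᵀ * (R + γ • (Bᵀ * X * B)) * (F - G) + bellmanMap A B Q R γ G X :=
        add_le_add_right (le_add_of_nonneg_left stage_cost_nonneg) _
    _ = bellmanMap A B Q R γ F X := by
        rw [bellmanMap_gainF hR hγ hXpsd, bellmanMap_eq_riccatiMap_add hR hγ hXpsd F, add_comm]
    _ = X := hX.symm

theorem continuousAt_inv_of_det_ne_zero {ι K : Type*} [Fintype ι] [DecidableEq ι] [NormedField K]
    {M : Matrix ι ι K} (hM : M.det ≠ 0) : ContinuousAt Inv.inv M := by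
  refine continuousAt_matrix_inv M ?_
  rw [Ring.inverse_eq_inv']
  exact continuousAt_inv₀ hM

theorem continuousAt_gainF (hdet : (R + γ • (Bᵀ * X * B)).det ≠ 0) :
    ContinuousAt (gainF A B R γ) X := by
  have hinv : ContinuousAt (fun X => (R + γ • (Bᵀ * X * B))⁻¹) X :=
    (continuousAt_inv_of_det_ne_zero hdet).comp (f := fun X => R + γ • (Bᵀ * X * B))
      (by fun_prop)
  have hmul : Continuous fun p : Matrix (Fin m) (Fin m) ℝ × Matrix (Fin n) (Fin n) ℝ =>
      -(γ • (p.1 * (Bᵀ * p.2 * A))) := by fun_prop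
  exact hmul.continuousAt.comp (f := fun X => ((R + γ • (Bᵀ * X * B))⁻¹, X))
    (hinv.prodMk continuousAt_id)

theorem continuous_bellmanMap :
    Continuous fun p : Matrix (Fin m) (Fin n) ℝ × Matrix (Fin n) (Fin n) ℝ =>
      bellmanMap A B Q R γ p.1 p.2 := by
  unfold bellmanMap
  fun_prop

theorem continuous_Pmat : Continuous (Pmat A B Q R γ) := by
  unfold Pmat
  fun_prop

theorem specRad_policyIteration_lt_one {F : ℕ → Matrix (Fin m) (Fin n) ℝ}
    {X : ℕ → Matrix (Fin n) (Fin n) ℝ} (hQ : Q.PosSemidef) (hR : R.PosDef) (hγ : 0 ≤ γ)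
    (hF0 : specRad (√γ • (A + B * F 0)) < 1)
    (evaluation : ∀ k, X k = bellmanMap A B Q R γ (F k) (X k))
    (improvement : ∀ k, F (k + 1) = gainF A B R γ (X k)) (k : ℕ) :
    specRad (√γ • (A + B * F k)) < 1 := by
  induction k with
  | zero => exact hF0
  | succ k ih => exact improvement k ▸ specRad_gainF_lt_one hQ hR hγ ih (evaluation k)

theorem tendsto_policyIteration {F : ℕ → Matrix (Fin m) (Fin n) ℝ}
    {X : ℕ → Matrix (Fin n) (Fin n) ℝ} (hQ : Q.PosSemidef) (hR : R.PosDef) (hγ : 0 ≤ γ)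
    (hF0 : specRad (√γ • (A + B * F 0)) < 1)
    (evaluation : ∀ k, X k = bellmanMap A B Q R γ (F k) (X k))
    (improvement : ∀ k, F (k + 1) = gainF A B R γ (X k)) :
    ∃ Y, Y.PosSemidef ∧ IsAREsol A B Q R γ Y ∧ Tendsto X atTop (𝓝 Y) ∧
      Tendsto F atTop (𝓝 (gainF A B R γ Y)) := by
  have stable := specRad_policyIteration_lt_one hQ hR hγ hF0 evaluation improvement
  have psd (k : ℕ) : (X k).PosSemidef :=
    posSemidef_of_eq_bellmanMap hQ hR hγ (stable k) (evaluation k)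
  have anti : Antitone X := antitone_nat_of_succ_le fun k => by
    refine le_of_le_bellmanMap_of_bellmanMap_le hγ (stable (k + 1)) (evaluation (k + 1)).le ?_
    conv_rhs => rw [evaluation k]
    exact improvement k ▸ bellmanMap_gainF_le hR hγ (psd k) (F k)
  obtain ⟨Y, hXY⟩ := exists_tendsto_of_antitone_of_bddBelow anti
    ⟨0, Set.forall_mem_range.2 fun k => (psd k).nonneg⟩
  have hY : Y.PosSemidef := isClosed_setOf_posSemidef.mem_of_tendsto hXY (.of_forall psd)
  have hdet : (R + γ • (Bᵀ * Y * B)).det ≠ 0 :=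
    (posDef_add_smul_transpose_mul_mul hR hγ hY B).det_pos.ne'
  have hFY : Tendsto F atTop (𝓝 (gainF A B R γ Y)) := by
    rw [← tendsto_add_atTop_iff_nat 1, funext improvement]
    exact (continuousAt_gainF hdet).tendsto.comp hXY
  have hfix : Y = bellmanMap A B Q R γ (gainF A B R γ Y) Y :=
    tendsto_nhds_unique hXY <| ((continuous_bellmanMap.tendsto (gainF A B R γ Y, Y)).comp
      (hFY.prodMk_nhds hXY)).congr fun k => (evaluation k).symm
  exact ⟨Y, hY, isAREsol_iff_eq_riccatiMap.2 (hfix.trans (bellmanMap_gainF hR hγ hY)), hXY, hFY⟩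

theorem extendF_transpose_mul_Pmat_mul_extendF :
    (extendF F)ᵀ * Pmat A B Q R γ X * extendF F = bellmanMap A B Q R γ F X := by
  rw [extendF, Pmat, Matrix.transpose_fromRows, Matrix.fromCols_mul_fromBlocks,
    Matrix.fromCols_mul_fromRows, bellmanMap]
  simp only [Matrix.transpose_add, Matrix.transpose_mul, Matrix.add_mul, Matrix.mul_add,
    Matrix.mul_assoc, Matrix.transpose_one, Matrix.one_mul, Matrix.mul_one, Matrix.smul_mul,
    Matrix.mul_smul, smul_add]
  abel

theorem smul_blockAF_transpose_mul_mul_add_blockLam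
    (P : Matrix (Fin n ⊕ Fin m) (Fin n ⊕ Fin m) ℝ) :
    γ • ((blockAF A B F)ᵀ * P * blockAF A B F) + blockLam Q R
      = Pmat A B Q R γ ((extendF F)ᵀ * P * extendF F) := by
  have factor : blockAF A B F = extendF F * Matrix.fromCols A B := by
    rw [blockAF, extendF, Matrix.fromRows_mul_fromCols, Matrix.one_mul, Matrix.one_mul]
  have conj : (blockAF A B F)ᵀ * P * blockAF A B F
      = (Matrix.fromCols A B)ᵀ * ((extendF F)ᵀ * P * extendF F) * Matrix.fromCols A B := by
    simp only [factor, Matrix.transpose_mul, Matrix.mul_assoc]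
  rw [conj, Matrix.transpose_fromCols, Matrix.fromRows_mul, Matrix.fromRows_mul_fromCols,
    blockLam, Matrix.fromBlocks_smul, Matrix.fromBlocks_add, Pmat, add_zero, add_zero,
    add_comm Q, add_comm R]

theorem neg_toBlocks₂₂_inv_mul_toBlocks₁₂_transpose_Pmat (hX : X.IsSymm) :
    -((Pmat A B Q R γ X).toBlocks₂₂⁻¹ * (Pmat A B Q R γ X).toBlocks₁₂ᵀ) = gainF A B R γ X := by
  rw [Pmat, Matrix.toBlocks_fromBlocks₂₂, Matrix.toBlocks_fromBlocks₁₂, gainF,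
    Matrix.transpose_smul, Matrix.mul_smul, Matrix.transpose_mul, Matrix.transpose_mul,
    Matrix.transpose_transpose, hX.eq, Matrix.mul_assoc Bᵀ, Matrix.mul_assoc Bᵀ X A]

theorem primal_dual_iteration_converges_general {F : ℕ → Matrix (Fin m) (Fin n) ℝ}
    {P : ℕ → Matrix (Fin n ⊕ Fin m) (Fin n ⊕ Fin m) ℝ} (hQ : Q.PosSemidef) (hR : R.PosDef)
    (hγ : 0 ≤ γ) (hF0 : specRad (√γ • (A + B * F 0)) < 1) (hsymm : ∀ s, (P s).IsSymm)
    (hP : ∀ s, γ • ((blockAF A B (F s))ᵀ * P s * blockAF A B (F s)) + blockLam Q R = P s)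
    (hF : ∀ s, F (s + 1) = -((P s).toBlocks₂₂⁻¹ * (P s).toBlocks₁₂ᵀ)) :
    ∃ X, X.PosSemidef ∧ IsAREsol A B Q R γ X ∧ Tendsto P atTop (𝓝 (Pmat A B Q R γ X)) ∧
      Tendsto F atTop (𝓝 (gainF A B R γ X)) := by
  let X (s : ℕ) := (extendF (F s))ᵀ * P s * extendF (F s)
  have P_eq (s : ℕ) : P s = Pmat A B Q R γ (X s) :=
    (hP s).symm.trans (smul_blockAF_transpose_mul_mul_add_blockLam (P s))
  have X_symm (s : ℕ) : (X s).IsSymm := by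
    simp only [X, Matrix.IsSymm, Matrix.transpose_mul, Matrix.transpose_transpose,
      (hsymm s).eq, Matrix.mul_assoc]
  have evaluation (s : ℕ) : X s = bellmanMap A B Q R γ (F s) (X s) := by
    rw [← extendF_transpose_mul_Pmat_mul_extendF, ← P_eq]
  have improvement (s : ℕ) : F (s + 1) = gainF A B R γ (X s) := by
    rw [hF, P_eq, neg_toBlocks₂₂_inv_mul_toBlocks₁₂_transpose_Pmat (X_symm s)]
  obtain ⟨Y, hY, hare, hXY, hFY⟩ := tendsto_policyIteration hQ hR hγ hF0 evaluation improvement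
  refine ⟨Y, hY, hare, ?_, hFY⟩
  rw [funext P_eq]
  exact (continuous_Pmat.tendsto Y).comp hXY

end PolicyIteration

theorem primal_dual_iteration_converges (n m : ℕ) (hn : 0 < n) (hm : 0 < m)
    (A : Matrix (Fin n) (Fin n) ℝ) (B : Matrix (Fin n) (Fin m) ℝ)
    (Q : Matrix (Fin n) (Fin n) ℝ) (R : Matrix (Fin m) (Fin m) ℝ)
    (hQ : Q.PosSemidef) (hR : R.PosDef)
    (γ : ℝ) (hγ0 : 0 < γ) (hγ1 : γ < 1)
    (Xstar : Matrix (Fin n) (Fin n) ℝ) (hXstar : Xstar.PosSemidef)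
    (hARE : IsAREsol A B Q R γ Xstar)
    (hXuniq : ∀ Y : Matrix (Fin n) (Fin n) ℝ,
      Y.PosSemidef → IsAREsol A B Q R γ Y → Y = Xstar)
    (hstab : specRad (A + B * gainF A B R γ Xstar) < 1)
    (Fseq : ℕ → Matrix (Fin m) (Fin n) ℝ)
    (Pseq : ℕ → Matrix (Fin n ⊕ Fin m) (Fin n ⊕ Fin m) ℝ)
    (hF0 : specRad (A + B * Fseq 0) < 1)
    (hPdef : ∀ s : ℕ, (Pseq s).IsSymm
      ∧ γ • ((blockAF A B (Fseq s))ᵀ * Pseq s * blockAF A B (Fseq s))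
          + blockLam Q R = Pseq s
      ∧ ∀ P' : Matrix (Fin n ⊕ Fin m) (Fin n ⊕ Fin m) ℝ, P'.IsSymm →
          γ • ((blockAF A B (Fseq s))ᵀ * P' * blockAF A B (Fseq s))
              + blockLam Q R = P' → P' = Pseq s)
    (hFstep : ∀ s : ℕ,
      Fseq (s + 1) = -(((Pseq s).toBlocks₂₂)⁻¹ * ((Pseq s).toBlocks₁₂)ᵀ)) :
    Filter.Tendsto Pseq Filter.atTop (nhds (Pmat A B Q R γ Xstar))
      ∧ Filter.Tendsto Fseq Filter.atTop (nhds (gainF A B R γ Xstar)) := by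
  have norm_sqrt_le : ‖√γ‖ ≤ 1 :=
    (Real.norm_of_nonneg (Real.sqrt_nonneg γ)).trans_le (Real.sqrt_le_one.2 hγ1.le)
  obtain ⟨X, hX, hX_are, hP, hF⟩ := primal_dual_iteration_converges_general hQ hR hγ0.le
    (specRad_smul_lt_one norm_sqrt_le hF0) (fun s => (hPdef s).1) (fun s => (hPdef s).2.1) hFstep
  exact hXuniq X hX hX_are ▸ ⟨hP, hF⟩
end
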